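/- Let G = (V,E) be a finite simple graph and B ⊆ V a clique with |B| ≥ 4 such that every vertex v ∈ V \ B has at least one neighbor in B, and every vertex v ∈ V \ B satisfies either N(v) ⊆ B or B ⊆ N(v). Then G is antimagic. -/

import Mathlib

open Finset

/-- A finite simple graph is *antimagic* if there is a bijective labelling of its edges
by `{1, 2, …, m}` (where `m` is the number of edges) such that the vertex sums
`σ(u) = ∑_{v : uv ∈ E} f(uv)` are pairwise distinct. -/
def IsAntimagic {V : Type*} [Fintype V] [DecidableEq V] (G : SimpleGraph V)
    [DecidableRel G.Adj] : Prop :=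
  ∃ f : Sym2 V → ℕ,
    Set.BijOn f ↑G.edgeFinset ↑(Finset.Icc 1 G.edgeFinset.card) ∧
    Function.Injective fun u : V => ∑ v ∈ G.neighborFinset u, f s(u, v)

/-!
Choose for every vertex `u` outside `B` an anchor `c u ∈ B` adjacent to `u`, and hand out the
labels `1, 2, …` in four rounds:

1. the edges disjoint from `B`, in any order;
2. the edges between `B` and its complement other than the `s(u, c u)`, in any order;
3. the anchor edges `s(u, c u)`, by increasing sum of the labels already present at `u`;
4. the edges inside `B`, by increasing `r a + r b`, where `r` ranks `B` by the sums of the labels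
   already present at its vertices.

Round 3 separates the vertices outside `B`. In round 4, `r a < r b` forces `s(a, x)` to get a
smaller label than `s(b, x)` for every third `x ∈ B`, which separates the vertices of `B`. Finally
every `b ∈ B` beats every `u ∉ B`. If `N(u) ⊂ B`, then `b` has at least as many edges inside `B` as
`u` has in total, and the former carry larger labels. If `B ⊆ N(u)`, then every other neighbour `x`
of `u` is adjacent to `b`, and `s(b, x)` was labelled in a later round than `s(u, x)`.
-/

/-- `f` labels the elements of `S` bijectively by `1, …, #S`. Nothing is required outside `S`, so
one function can label every member of an increasing chain of sets. -/
def IsLabelling {α : Type*} (S : Finset α) (f : α → ℕ) : Prop :=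
  Set.BijOn f S (Icc 1 #S)

namespace IsLabelling

variable {α : Type*} {S T : Finset α} {f f' : α → ℕ} {a b : α}

theorem empty (f : α → ℕ) : IsLabelling ∅ f := by
  simp [IsLabelling]

theorem congr (hf : IsLabelling S f) (h : Set.EqOn f f' S) : IsLabelling S f' :=
  Set.BijOn.congr hf h

theorem injOn (hf : IsLabelling S f) : Set.InjOn f S :=
  Set.BijOn.injOn hf

theorem one_le (hf : IsLabelling S f) (ha : a ∈ S) : 1 ≤ f a :=
  (mem_Icc.1 (Set.BijOn.mapsTo hf ha)).1

theorem le_card (hf : IsLabelling S f) (ha : a ∈ S) : f a ≤ #S :=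
  (mem_Icc.1 (Set.BijOn.mapsTo hf ha)).2

theorem card_lt (hS : IsLabelling S f) (hT : IsLabelling T f) (hST : S ⊆ T) (hbT : b ∈ T)
    (hbS : b ∉ S) : #S < f b := by
  by_contra! hle
  obtain ⟨a, haS, hab⟩ := Set.BijOn.surjOn hS (mem_Icc.2 ⟨hT.one_le hbT, hle⟩)
  exact hbS (hT.injOn (hST haS) hbT hab ▸ haS)

theorem lt (hS : IsLabelling S f) (hT : IsLabelling T f) (hST : S ⊆ T) (ha : a ∈ S)
    (hbT : b ∈ T) (hbS : b ∉ S) : f a < f b :=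
  (hS.le_card ha).trans_lt (hS.card_lt hT hST hbT hbS)

variable [DecidableEq α]

theorem insert_update (hf : IsLabelling S f) (ha : a ∉ S) :
    IsLabelling (insert a S) (Function.update f a (#S + 1)) := by
  have hS : IsLabelling S (Function.update f a (#S + 1)) :=
    hf.congr fun x hx ↦ (Function.update_of_ne (ne_of_mem_of_not_mem hx ha) _ _).symm
  have hIcc : insert (#S + 1) (Icc 1 #S) = Icc 1 (#S + 1) :=
    insert_Icc_right_eq_Icc_succ (by simp)
  rw [IsLabelling, card_insert_of_notMem ha]
  have hinsert := Set.BijOn.insert hS (a := a) (by simp)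
  rwa [Function.update_self, ← coe_insert, ← coe_insert, hIcc] at hinsert

variable {β : Type*} [LinearOrder β]

theorem exists_extension_union (hf : IsLabelling S f) (key : α → β) (D : Finset α)
    (hSD : Disjoint S D) :
    ∃ f', IsLabelling (S ∪ D) f' ∧ Set.EqOn f f' S ∧
      ∀ a ∈ D, ∀ b ∈ D, key a < key b → f' a < f' b := by
  induction D using Finset.induction_on_max_value key with
  | empty => exact ⟨f, by simpa using hf, Set.eqOn_refl _ _, by simp⟩
  | insert m D hmD hmax ih =>
    obtain ⟨hmS, hSD⟩ := disjoint_insert_right.1 hSD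
    obtain ⟨f', hf', heq, hmono⟩ := ih hSD
    have hm : m ∉ S ∪ D := by simp [hmS, hmD]
    have hupdate : ∀ x ∈ S ∪ D, Function.update f' m (#(S ∪ D) + 1) x = f' x := fun x hx ↦
      Function.update_of_ne (ne_of_mem_of_not_mem hx hm) _ _
    refine ⟨Function.update f' m (#(S ∪ D) + 1), ?_, fun x hx ↦ ?_, fun a ha b hb hab ↦ ?_⟩
    · rw [union_insert]
      exact hf'.insert_update hm
    · rw [heq hx, hupdate x (mem_union_left D hx)]
    · have haD : a ∈ D := mem_of_mem_insert_of_ne ha <| by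
        rintro rfl
        rcases mem_insert.1 hb with rfl | hbD
        exacts [hab.false, (hmax b hbD).not_gt hab]
      rw [hupdate a (mem_union_right S haD)]
      rcases mem_insert.1 hb with rfl | hbD
      · rw [Function.update_self]
        exact Nat.lt_succ_of_le (hf'.le_card (mem_union_right S haD))
      · rw [hupdate b (mem_union_right S hbD)]
        exact hmono a haD b hbD hab

theorem exists_extension (hf : IsLabelling S f) (hST : S ⊆ T) (key : α → β) :
    ∃ f', IsLabelling T f' ∧ Set.EqOn f f' S ∧
      ∀ a ∈ T \ S, ∀ b ∈ T \ S, key a < key b → f' a < f' b := by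
  simpa only [union_sdiff_of_subset hST] using
    hf.exists_extension_union key (T \ S) disjoint_sdiff

end IsLabelling

theorem exists_isLabelling_strictMono {α β : Type*} [LinearOrder β] (S : Finset α) (key : α → β) :
    ∃ f, IsLabelling S f ∧ ∀ a ∈ S, ∀ b ∈ S, key a < key b → f a < f b := by
  classical
  obtain ⟨f, hf, -, hmono⟩ :=
    (IsLabelling.empty fun _ ↦ 0).exists_extension (empty_subset S) key
  exact ⟨f, hf, by simpa using hmono⟩

section Anchor

variable {V : Type*} {G : SimpleGraph V} {B : Finset V} {c : V → V} {u v : V}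

/-- `c` assigns to every vertex outside `B` a neighbour in `B`; its values on `B` are irrelevant. -/
def IsAnchor (G : SimpleGraph V) (B : Finset V) (c : V → V) : Prop :=
  ∀ u ∉ B, c u ∈ B ∧ G.Adj u (c u)

theorem IsAnchor.ne_of_notMem (hc : IsAnchor G B c) (hu : u ∉ B) (hv : v ∉ B) : u ≠ c v :=
  (ne_of_mem_of_not_mem (hc v hv).1 hu).symm

theorem IsAnchor.eq_of_mk_eq (hc : IsAnchor G B c) (hu : u ∉ B) (hv : v ∉ B)
    (h : s(u, c u) = s(v, c v)) : u = v := by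
  rcases Sym2.eq_iff.1 h with ⟨huv, -⟩ | ⟨huv, -⟩
  exacts [huv, absurd huv (hc.ne_of_notMem hu hv)]

/-- The edges `s(u, c u)` with `u ∉ B`. -/
def anchorEdges [Fintype V] [DecidableEq V] (B : Finset V) (c : V → V) : Finset (Sym2 V) :=
  Bᶜ.image fun u ↦ s(u, c u)

theorem IsAnchor.mk_mem_anchorEdges [Fintype V] [DecidableEq V] (hc : IsAnchor G B c)
    (hu : u ∉ B) : s(u, v) ∈ anchorEdges B c ↔ v = c u := by
  simp only [anchorEdges, mem_image, mem_compl]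
  constructor
  · rintro ⟨w, hw, he⟩
    rcases Sym2.eq_iff.1 he with ⟨rfl, rfl⟩ | ⟨-, rfl⟩
    exacts [rfl, absurd rfl (hc.ne_of_notMem hu hw)]
  · rintro rfl
    exact ⟨u, hu, rfl⟩

end Anchor

section Graph

variable {V : Type*} [Fintype V] [DecidableEq V] (G : SimpleGraph V) [DecidableRel G.Adj]

/-- The vertex sum `σ(u)` of the edge labelling `f`. -/
def vertexSum (f : Sym2 V → ℕ) (u : V) : ℕ :=
  ∑ v ∈ G.neighborFinset u, f s(u, v)

/-- The sum of the labels at `u`, leaving out the edge from `u` to `c u`. -/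
def sumOffAnchor (c : V → V) (f : Sym2 V → ℕ) (u : V) : ℕ :=
  ∑ v ∈ (G.neighborFinset u).erase (c u), f s(u, v)

/-- The sum of the labels of the edges from `b` to vertices outside `B`. -/
def sumOutside (B : Finset V) (f : Sym2 V → ℕ) (b : V) : ℕ :=
  ∑ v ∈ G.neighborFinset b \ B, f s(b, v)

/-- The edges with no endpoint in `B`. -/
def edgesDisjoint (B : Finset V) : Finset (Sym2 V) :=
  {e ∈ G.edgeFinset | ∀ x ∈ e, x ∉ B}

/-- The edges with at least one endpoint outside `B`. -/
def edgesNotWithin (B : Finset V) : Finset (Sym2 V) :=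
  {e ∈ G.edgeFinset | ∃ x ∈ e, x ∉ B}

/-- On the edges `s(u, c u)` with `u ∉ B`, the labelling `f` respects the order of the sums of the
remaining labels at `u`. -/
def AnchorMonotone (B : Finset V) (c : V → V) (f : Sym2 V → ℕ) : Prop :=
  ∀ u ∉ B, ∀ v ∉ B,
    sumOffAnchor G c f u < sumOffAnchor G c f v → f s(u, c u) < f s(v, c v)

/-- `b` dominates `a` under `f`: it receives at least as much as `a` from outside `B`, and more than
`a` from each third vertex of `B`. The edge `s(a, b)` counts for both and is left out. -/
def Dominates (B : Finset V) (f : Sym2 V → ℕ) (b a : V) : Prop :=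
  sumOutside G B f a ≤ sumOutside G B f b ∧
    ∀ x ∈ (B.erase a).erase b, f s(a, x) < f s(b, x)

variable {G} {B : Finset V} {c : V → V} {f f' : Sym2 V → ℕ} {u v a b : V}

@[simp]
theorem mk_mem_edgesDisjoint : s(u, v) ∈ edgesDisjoint G B ↔ G.Adj u v ∧ u ∉ B ∧ v ∉ B := by
  simp [edgesDisjoint]

@[simp]
theorem mk_mem_edgesNotWithin :
    s(u, v) ∈ edgesNotWithin G B ↔ G.Adj u v ∧ (u ∉ B ∨ v ∉ B) := by
  simp [edgesNotWithin]

theorem edgesNotWithin_subset : edgesNotWithin G B ⊆ G.edgeFinset :=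
  filter_subset _ _

theorem edgesDisjoint_subset_edgesNotWithin : edgesDisjoint G B ⊆ edgesNotWithin G B := by
  intro e
  induction e with
  | _ u v =>
    rw [mk_mem_edgesDisjoint, mk_mem_edgesNotWithin]
    exact fun ⟨hadj, hu, _⟩ ↦ ⟨hadj, .inl hu⟩

theorem mk_mem_edgeFinset_sdiff (hB : G.IsClique B) (ha : a ∈ B) (hb : b ∈ B)
    (hab : a ≠ b) : s(a, b) ∈ G.edgeFinset \ edgesNotWithin G B := by
  simp [ha, hb, hB ha hb hab]

/-! ### Vertices outside the clique -/

theorem IsAnchor.sumOffAnchor_add (hc : IsAnchor G B c) (hu : u ∉ B) (f : Sym2 V → ℕ) :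
    sumOffAnchor G c f u + f s(u, c u) = vertexSum G f u :=
  sum_erase_add _ _ (by simpa using (hc u hu).2)

theorem AnchorMonotone.injOn_vertexSum (hmono : AnchorMonotone G B c f) (hc : IsAnchor G B c)
    (hf : Set.InjOn f G.edgeFinset) : Set.InjOn (vertexSum G f) (B : Set V)ᶜ := by
  intro u hu v hv huv
  rw [← hc.sumOffAnchor_add hu, ← hc.sumOffAnchor_add hv] at huv
  have hsum : sumOffAnchor G c f u = sumOffAnchor G c f v := by
    rcases lt_trichotomy (sumOffAnchor G c f u) (sumOffAnchor G c f v) with hlt | heq | hgt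
    · have := hmono u hu v hv hlt
      omega
    · exact heq
    · have := hmono v hv u hu hgt
      omega
  exact hc.eq_of_mk_eq hu hv <|
    hf (by simpa using (hc u hu).2) (by simpa using (hc v hv).2) (by omega)

theorem IsAnchor.edgesDisjoint_subset_sdiff (hc : IsAnchor G B c) :
    edgesDisjoint G B ⊆ edgesNotWithin G B \ anchorEdges B c := by
  intro e he
  refine mem_sdiff.2 ⟨edgesDisjoint_subset_edgesNotWithin he, ?_⟩
  induction e with
  | _ u v =>
    obtain ⟨-, hu, hv⟩ := mk_mem_edgesDisjoint.1 he
    rw [hc.mk_mem_anchorEdges hu]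
    exact hc.ne_of_notMem hv hu

theorem sumOffAnchor_congr (hu : u ∉ B) (h : Set.EqOn f f' (edgesNotWithin G B)) :
    sumOffAnchor G c f u = sumOffAnchor G c f' u := by
  refine sum_congr rfl fun v hv ↦ h ?_
  simpa [hu] using mem_of_mem_erase hv

theorem AnchorMonotone.congr (hmono : AnchorMonotone G B c f) (hc : IsAnchor G B c)
    (h : Set.EqOn f f' (edgesNotWithin G B)) : AnchorMonotone G B c f' := by
  have hanchor : ∀ u ∉ B, f s(u, c u) = f' s(u, c u) := fun u hu ↦
    h (by simpa [hu] using (hc u hu).2)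
  intro u hu v hv hlt
  rw [← sumOffAnchor_congr hu h, ← sumOffAnchor_congr hv h] at hlt
  rw [← hanchor u hu, ← hanchor v hv]
  exact hmono u hu v hv hlt

theorem IsAnchor.exists_anchorMonotone (hc : IsAnchor G B c) :
    ∃ f, IsLabelling (edgesDisjoint G B) f ∧ IsLabelling (edgesNotWithin G B) f ∧
      AnchorMonotone G B c f := by
  obtain ⟨f₁, hf₁, -⟩ := exists_isLabelling_strictMono (edgesDisjoint G B) fun _ ↦ 0
  obtain ⟨f₂, hf₂, heq₁₂, -⟩ := hf₁.exists_extension hc.edgesDisjoint_subset_sdiff fun _ ↦ 0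
  obtain ⟨f, hf, heq, hmono⟩ := hf₂.exists_extension sdiff_subset
    fun e ↦ ∑ x ∈ e.toFinset \ B, sumOffAnchor G c f₂ x
  refine ⟨f, (hf₁.congr heq₁₂).congr (heq.mono hc.edgesDisjoint_subset_sdiff), hf, ?_⟩
  have hsum : ∀ u ∉ B, sumOffAnchor G c f u = sumOffAnchor G c f₂ u := fun u hu ↦
    sum_congr rfl fun v hv ↦ (heq <| by
      obtain ⟨hne, hadj⟩ := mem_erase.1 hv
      simpa [hc.mk_mem_anchorEdges hu, hne, hu] using hadj).symm
  have hkey : ∀ u ∉ B, ∑ x ∈ s(u, c u).toFinset \ B, sumOffAnchor G c f₂ x =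
      sumOffAnchor G c f u := fun u hu ↦ by
    rw [Sym2.toFinset_mk_eq, insert_sdiff_of_notMem _ hu,
      sdiff_eq_empty_iff_subset.2 (singleton_subset_iff.2 (hc u hu).1), insert_empty_eq,
      sum_singleton, hsum u hu]
  have hmem : ∀ u ∉ B, s(u, c u) ∈
      edgesNotWithin G B \ (edgesNotWithin G B \ anchorEdges B c) := fun u hu ↦ by
    simp [hc.mk_mem_anchorEdges hu, hu, (hc u hu).2]
  intro u hu v hv hlt
  refine hmono _ (hmem u hu) _ (hmem v hv) ?_
  rwa [hkey u hu, hkey v hv]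

/-! ### Vertices of the clique -/

theorem sumOutside_add_sum_erase (hB : G.IsClique B) (hb : b ∈ B) (f : Sym2 V → ℕ) :
    sumOutside G B f b + ∑ v ∈ B.erase b, f s(b, v) = vertexSum G f b := by
  have hinter : G.neighborFinset b ∩ B = B.erase b := by
    ext v
    simp only [mem_inter, SimpleGraph.mem_neighborFinset, mem_erase]
    exact ⟨fun ⟨hadj, hv⟩ ↦ ⟨hadj.ne', hv⟩, fun ⟨hne, hv⟩ ↦ ⟨hB hb hv hne.symm, hv⟩⟩
  rw [sumOutside, vertexSum, ← hinter, add_comm, sum_inter_add_sum_sdiff]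

theorem sumOutside_congr (h : Set.EqOn f f' (edgesNotWithin G B)) (b : V) :
    sumOutside G B f b = sumOutside G B f' b := by
  refine sum_congr rfl fun v hv ↦ h ?_
  obtain ⟨hadj, hv⟩ := mem_sdiff.1 hv
  simpa [hv] using hadj

theorem Dominates.vertexSum_lt (hdom : Dominates G B f b a) (hB : G.IsClique B) (hcard : 3 ≤ #B)
    (ha : a ∈ B) (hb : b ∈ B) (hab : a ≠ b) : vertexSum G f a < vertexSum G f b := by
  have hb' : b ∈ B.erase a := mem_erase.2 ⟨hab.symm, hb⟩
  have ha' : a ∈ B.erase b := mem_erase.2 ⟨hab, ha⟩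
  have hthird : ((B.erase a).erase b).Nonempty := by
    rw [← card_pos, card_erase_of_mem hb', card_erase_of_mem ha]
    omega
  calc vertexSum G f a
      = sumOutside G B f a + (∑ x ∈ (B.erase a).erase b, f s(a, x) + f s(a, b)) := by
        rw [sum_erase_add _ _ hb', sumOutside_add_sum_erase hB ha]
    _ < sumOutside G B f b + (∑ x ∈ (B.erase a).erase b, f s(b, x) + f s(a, b)) :=
        add_lt_add_of_le_of_lt hdom.1 <|
          Nat.add_lt_add_right (sum_lt_sum_of_nonempty hthird hdom.2) _
    _ = vertexSum G f b := by
        rw [erase_right_comm, Sym2.eq_swap, sum_erase_add _ _ ha', sumOutside_add_sum_erase hB hb]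

theorem IsLabelling.exists_extension_dominates (hf : IsLabelling (edgesNotWithin G B) f)
    (hB : G.IsClique B) :
    ∃ f', IsLabelling G.edgeFinset f' ∧ Set.EqOn f f' (edgesNotWithin G B) ∧
      ∀ a ∈ B, ∀ b ∈ B, a ≠ b → Dominates G B f' b a ∨ Dominates G B f' a b := by
  obtain ⟨r, hr, hrmono⟩ := exists_isLabelling_strictMono B (sumOutside G B f)
  obtain ⟨f', hf', heq, hmono⟩ :=
    hf.exists_extension edgesNotWithin_subset fun e ↦ ∑ x ∈ e.toFinset, r x
  refine ⟨f', hf', heq, ?_⟩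
  have dominates_of_lt : ∀ a ∈ B, ∀ b ∈ B, r a < r b → Dominates G B f' b a := by
    intro a ha b hb hab
    refine ⟨?_, fun x hx ↦ ?_⟩
    · rw [← sumOutside_congr heq, ← sumOutside_congr heq]
      exact not_lt.1 fun hlt ↦ (hrmono b hb a ha hlt).not_gt hab
    · obtain ⟨hxb, hxa, hx⟩ : x ≠ b ∧ x ≠ a ∧ x ∈ B := by simpa using hx
      refine hmono _ (mk_mem_edgeFinset_sdiff hB ha hx hxa.symm) _
        (mk_mem_edgeFinset_sdiff hB hb hx hxb.symm) ?_
      simpa only [Sym2.toFinset_mk_eq, sum_pair hxa.symm, sum_pair hxb.symm] using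
        Nat.add_lt_add_right hab (r x)
  intro a ha b hb hab
  exact (hr.injOn.ne ha hb hab).lt_or_gt.imp (dominates_of_lt a ha b hb) (dominates_of_lt b hb a ha)

/-! ### Clique vertices against the others -/

theorem vertexSum_lt_of_card_neighborFinset_lt (hB : G.IsClique B)
    (hS : IsLabelling (edgesNotWithin G B) f) (hE : IsLabelling G.edgeFinset f) (hcard : 1 < #B)
    (hu : u ∉ B) (hb : b ∈ B) (hdeg : #(G.neighborFinset u) < #B) :
    vertexSum G f u < vertexSum G f b := by
  have hle : ∀ x ∈ G.neighborFinset u, f s(u, x) ≤ #(edgesNotWithin G B) := fun x hx ↦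
    hS.le_card (by simpa [hu] using hx)
  have hge : ∀ x ∈ B.erase b, #(edgesNotWithin G B) + 1 ≤ f s(b, x) := fun x hx ↦ by
    obtain ⟨hxb, hx⟩ := mem_erase.1 hx
    obtain ⟨hmem, hnotMem⟩ :=
      mem_sdiff.1 (mk_mem_edgeFinset_sdiff hB hb hx hxb.symm)
    exact hS.card_lt hE edgesNotWithin_subset hmem hnotMem
  have herase : #(B.erase b) = #B - 1 := card_erase_of_mem hb
  calc vertexSum G f u
      ≤ #(G.neighborFinset u) * #(edgesNotWithin G B) := sum_le_card_nsmul _ _ _ hle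
    _ ≤ #(B.erase b) * #(edgesNotWithin G B) := Nat.mul_le_mul_right _ (by omega)
    _ < #(B.erase b) * (#(edgesNotWithin G B) + 1) :=
        Nat.mul_lt_mul_of_pos_left (Nat.lt_succ_self _) (by omega)
    _ ≤ ∑ x ∈ B.erase b, f s(b, x) := card_nsmul_le_sum _ _ _ hge
    _ ≤ vertexSum G f b := by
        rw [← sumOutside_add_sum_erase hB hb]
        exact Nat.le_add_left _ _

theorem vertexSum_lt_of_forall_lt (hub : G.Adj u b)
    (hsub : (G.neighborFinset u).erase b ⊆ G.neighborFinset b)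
    (hne : ((G.neighborFinset u).erase b).Nonempty)
    (hlt : ∀ x ∈ (G.neighborFinset u).erase b, f s(u, x) < f s(b, x)) :
    vertexSum G f u < vertexSum G f b := by
  have hsub' : (G.neighborFinset u).erase b ⊆ (G.neighborFinset b).erase u := fun x hx ↦
    mem_erase.2 ⟨by rintro rfl; simp at hx, hsub hx⟩
  calc vertexSum G f u
      = ∑ x ∈ (G.neighborFinset u).erase b, f s(u, x) + f s(u, b) :=
        (sum_erase_add _ _ (by simpa using hub)).symm
    _ < ∑ x ∈ (G.neighborFinset u).erase b, f s(b, x) + f s(u, b) :=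
        Nat.add_lt_add_right (sum_lt_sum_of_nonempty hne hlt) _
    _ ≤ ∑ x ∈ (G.neighborFinset b).erase u, f s(b, x) + f s(u, b) :=
        Nat.add_le_add_right (sum_le_sum_of_subset hsub') _
    _ = vertexSum G f b := by
        rw [Sym2.eq_swap]
        exact sum_erase_add _ _ (by simpa using hub.symm)

theorem vertexSum_lt_of_subset_neighborFinset (hB : G.IsClique B)
    (hR : IsLabelling (edgesDisjoint G B) f) (hS : IsLabelling (edgesNotWithin G B) f)
    (hE : IsLabelling G.edgeFinset f) (hcard : 1 < #B)
    (h : ∀ v ∉ B, G.neighborFinset v ⊆ B ∨ B ⊆ G.neighborFinset v)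
    (hu : u ∉ B) (hb : b ∈ B) (hBu : B ⊆ G.neighborFinset u) :
    vertexSum G f u < vertexSum G f b := by
  have hadj_of_notMem : ∀ x ∉ B, G.Adj u x → G.Adj b x := fun x hx hux ↦ by
    have hBx : B ⊆ G.neighborFinset x :=
      (h x hx).resolve_left fun hxB ↦ hu (hxB (by simpa using hux.symm))
    simpa [G.adj_comm] using hBx hb
  refine vertexSum_lt_of_forall_lt (by simpa using hBu hb) (fun x hx ↦ ?_) ?_ fun x hx ↦ ?_
  · obtain ⟨hxb, hux⟩ : x ≠ b ∧ G.Adj u x := by simpa using hx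
    rw [SimpleGraph.mem_neighborFinset]
    by_cases hxB : x ∈ B
    exacts [hB hb hxB hxb.symm, hadj_of_notMem x hxB hux]
  · have := card_le_card hBu
    rw [← card_pos, card_erase_of_mem (hBu hb)]
    omega
  · obtain ⟨hxb, hux⟩ : x ≠ b ∧ G.Adj u x := by simpa using hx
    by_cases hxB : x ∈ B
    · obtain ⟨hmem, hnotMem⟩ :=
        mem_sdiff.1 (mk_mem_edgeFinset_sdiff hB hb hxB hxb.symm)
      exact hS.lt hE edgesNotWithin_subset (by simp [hux, hu]) hmem hnotMem
    · exact hR.lt hS edgesDisjoint_subset_edgesNotWithin (by simp [hux, hu, hxB])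
        (by simp [hadj_of_notMem x hxB hux, hxB]) (by simp [hb])

theorem vertexSum_lt_of_notMem_of_mem (hB : G.IsClique B)
    (hR : IsLabelling (edgesDisjoint G B) f) (hS : IsLabelling (edgesNotWithin G B) f)
    (hE : IsLabelling G.edgeFinset f) (hcard : 1 < #B)
    (h : ∀ v ∉ B, G.neighborFinset v ⊆ B ∨ B ⊆ G.neighborFinset v) (hu : u ∉ B) (hb : b ∈ B) :
    vertexSum G f u < vertexSum G f b := by
  by_cases hBu : B ⊆ G.neighborFinset u
  · exact vertexSum_lt_of_subset_neighborFinset hB hR hS hE hcard h hu hb hBu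
  · exact vertexSum_lt_of_card_neighborFinset_lt hB hS hE hcard hu hb
      (card_lt_card ⟨(h u hu).resolve_right hBu, hBu⟩)

end Graph

theorem antimagic_of_clique_split_general {V : Type*} [Fintype V] [DecidableEq V]
    (G : SimpleGraph V) [DecidableRel G.Adj] (B : Finset V)
    (hclique : G.IsClique ↑B) (hcard : 3 ≤ B.card)
    (hdom : ∀ v ∉ B, ∃ u ∈ B, G.Adj v u)
    (h : ∀ v ∉ B, G.neighborFinset v ⊆ B ∨ B ⊆ G.neighborFinset v) :
    IsAntimagic G := by
  choose! c hc using hdom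
  obtain ⟨f₀, hdisjoint, hnotWithin, hanchor⟩ := IsAnchor.exists_anchorMonotone hc
  obtain ⟨f, hf, heq, hdominates⟩ := hnotWithin.exists_extension_dominates hclique
  have outside_lt : ∀ u ∉ B, ∀ b ∈ B, vertexSum G f u < vertexSum G f b := fun u hu b hb ↦
    vertexSum_lt_of_notMem_of_mem hclique
      (hdisjoint.congr (heq.mono edgesDisjoint_subset_edgesNotWithin)) (hnotWithin.congr heq) hf
      (by omega) h hu hb
  refine ⟨f, hf, fun u v (huv : vertexSum G f u = vertexSum G f v) ↦ ?_⟩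
  by_cases hu : u ∈ B <;> by_cases hv : v ∈ B
  · by_contra hne
    rcases hdominates u hu v hv hne with hvu | huv'
    · exact (hvu.vertexSum_lt hclique hcard hu hv hne).ne huv
    · exact (huv'.vertexSum_lt hclique hcard hv hu (Ne.symm hne)).ne' huv
  · exact absurd huv (outside_lt v hv u hu).ne'
  · exact absurd huv (outside_lt u hu v hv).ne
  · exact (hanchor.congr hc heq).injOn_vertexSum hc hf.injOn hu hv huv

/-- If `B` is a clique of order at least `4` in a graph `G` such that every vertex outside
`B` has a neighbor in `B` and satisfies `N(v) ⊆ B` or `B ⊆ N(v)`, then `G` is antimagic. -/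
theorem antimagic_of_clique_split {V : Type*} [Fintype V] [DecidableEq V]
    (G : SimpleGraph V) [DecidableRel G.Adj] (B : Finset V)
    (hclique : G.IsClique ↑B) (hcard : 4 ≤ B.card)
    (hdom : ∀ v ∉ B, ∃ u ∈ B, G.Adj v u)
    (h : ∀ v ∉ B, G.neighborFinset v ⊆ B ∨ B ⊆ G.neighborFinset v) :
    IsAntimagic G :=
  antimagic_of_clique_split_general G B hclique (by omega) hdom h
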